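/- Let n ≥ 13. For a ∈ {0,1,…,⌊n/2⌋} let m_a = C(n,a) − C(n,a−1), and let v_j ∈ ℤ^{⌊n/2⌋+1} for j = 0, 1, 2 have entries (v_j)_a = C(n−2j, a−j) − C(n−2j, a−j−1). Then the minimum of Σ_{a=0}^{⌊n/2⌋} m_a·max(x_a,0) over all nonzero integer vectors x ∈ ℤ^{⌊n/2⌋+1} orthogonal to v_0, v_1, and v_2 equals 2(n−1)(n−3)(n−5)/3. -/

import Mathlib

/-!
Put `u_a = a(n+1-a)` and `y_a = m_a x_a`. Since `v_1 = m·u/(n(n-1))` and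
`v_2 = m·u(u-n)/(n(n-1)(n-2)(n-3))` entrywise (`v_one`, `v_two`), orthogonality to `v_0, v_1, v_2`
says that `y` annihilates all polynomials of degree at most two in `u` (`orthogonal_iff`). In
particular `y` has total zero, so the objective `S = ∑ max(y_a, 0)` dominates `|∑_{a ∈ T} y_a|`
for every set `T` of indices (`abs_partial_le`).

Let `V = 2(n-1)(n-3)(n-5)/3`. If `x` is supported on `{0,1,2,3}`, the three equations leave one
degree of freedom, and eliminating `y_0` and `y_2` gives `y_1 + y_3 = V x_3` with `x_3 ≠ 0`; taking
`T = {1,3}` yields `S ≥ V` (`bound_of_support`). The value `V` is attained at `x_3 = 1`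
(`minimizer`).

If `x_a ≠ 0` for some `a ≥ 4`, then `T = {a}` gives `S ≥ m_a`. For `n ≥ 18` all these `m_a` are at
least `V` (`mult_large`). For `13 ≤ n ≤ 17` this still holds except for the indices `4,5,6` when
`n = 13`, `4,7` when `n = 14`, and `4` when `n = 15, 16, 17`. There `S < V` forces the exceptional
entries into `{-1,0,1}`, and for each nonzero choice the moment equations contradict `S < V` by
linear arithmetic (`lower_bound`).
-/

/-- the binomial coefficient `C(a,b)` for `b : ℤ`, with the convention that it vanishes
whenever `b ∉ {0, 1, …, a}` -/
def binomZ (a : ℕ) (b : ℤ) : ℤ := if 0 ≤ b then (a.choose b.toNat : ℤ) else 0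

/-! ### Binomial identities -/

/-- The multiplicity `m_a = C(n,a) - C(n,a-1)` of the spin-`(n/2-a)` representation,
for an arbitrary integer `a`. -/
def mult (n : ℕ) (a : ℤ) : ℤ := binomZ n a - binomZ n (a - 1)

lemma binomZ_natCast (n a : ℕ) : binomZ n (a : ℤ) = n.choose a := by
  simp [binomZ]

lemma binomZ_of_neg (n : ℕ) {b : ℤ} (hb : b < 0) : binomZ n b = 0 := by
  simp [binomZ, hb]

lemma binomZ_pascal (n : ℕ) (b : ℤ) :
    binomZ (n + 1) b = binomZ n b + binomZ n (b - 1) := by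
  rcases lt_trichotomy b 0 with h | h | h
  · rw [binomZ_of_neg _ h, binomZ_of_neg _ h, binomZ_of_neg _ (by omega)]; rfl
  · subst h; simp [binomZ]
  · obtain ⟨c, rfl⟩ : ∃ c : ℕ, b = ((c + 1 : ℕ) : ℤ) := ⟨(b - 1).toNat, by omega⟩
    have e : ((c + 1 : ℕ) : ℤ) - 1 = (c : ℤ) := by push_cast; ring
    rw [e, binomZ_natCast, binomZ_natCast, binomZ_natCast, Nat.choose_succ_succ]
    push_cast; ring

lemma binomZ_absorb (n : ℕ) (b : ℤ) :
    b * binomZ (n + 1) b = (n + 1) * binomZ n (b - 1) := by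
  rcases lt_trichotomy b 0 with h | h | h
  · rw [binomZ_of_neg _ h, binomZ_of_neg _ (by omega)]; ring
  · subst h; simp [binomZ]
  · obtain ⟨c, rfl⟩ : ∃ c : ℕ, b = ((c + 1 : ℕ) : ℤ) := ⟨(b - 1).toNat, by omega⟩
    have e : ((c + 1 : ℕ) : ℤ) - 1 = (c : ℤ) := by push_cast; ring
    rw [e, binomZ_natCast, binomZ_natCast]
    have := Nat.add_one_mul_choose_eq n c
    zify at this
    push_cast
    linarith

lemma binomZ_absorb' (n : ℕ) (b : ℤ) :
    (n + 1 - b) * binomZ (n + 1) b = (n + 1) * binomZ n b := by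
  linear_combination (n + 1 : ℤ) * binomZ_pascal n b - binomZ_absorb n b

lemma binomZ_ratio (n : ℕ) (b : ℤ) :
    b * binomZ n b = (n - b + 1) * binomZ n (b - 1) := by
  linear_combination binomZ_absorb n b - b * binomZ_pascal n b
/-- Lowering both arguments symmetrically: `N(N-1) C(N-2,b-1) = b(N-b) C(N,b)`, `N = n + 2`. -/
lemma binomZ_two_step (n : ℕ) (b : ℤ) :
    ((n : ℤ) + 2) * (n + 1) * binomZ n (b - 1) = b * (n + 2 - b) * binomZ (n + 2) b := by
  have h1 := binomZ_absorb' n (b - 1)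
  have h2 := binomZ_absorb (n + 1) b
  push_cast at h1 h2
  linear_combination -((n : ℤ) + 2) * h1 - (n + 2 - b) * h2

/-- `v_1` is `m` times `u_a = a(n+1-a)`, up to the factor `n(n-1)`. -/
lemma v_one (n : ℕ) (hn : 2 ≤ n) (a : ℤ) :
    (n : ℤ) * (n - 1) * (binomZ (n - 2) (a - 1) - binomZ (n - 2) (a - 1 - 1))
      = a * (n + 1 - a) * mult n a := by
  obtain ⟨k, rfl⟩ : ∃ k, n = k + 2 := ⟨n - 2, by omega⟩
  have h1 := binomZ_two_step k a
  have h2 := binomZ_two_step k (a - 1)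
  have h3 := binomZ_ratio (k + 2) a
  simp only [mult, Nat.add_sub_cancel]
  push_cast at *
  linear_combination h1 - h2 - h3

/-- `v_2` is `m` times `u_a (u_a - n)`, up to a factor, since `(a-1)(n-a) = u_a - n`. -/
lemma v_two (n : ℕ) (hn : 4 ≤ n) (a : ℤ) :
    (n : ℤ) * (n - 1) * (n - 2) * (n - 3) *
        (binomZ (n - 4) (a - 2) - binomZ (n - 4) (a - 2 - 1))
      = a * (n + 1 - a) * ((a - 1) * (n - a)) * mult n a := by
  obtain ⟨k, rfl⟩ : ∃ k, n = k + 4 := ⟨n - 4, by omega⟩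
  have h1 := binomZ_two_step k (a - 1)
  have h1' := binomZ_two_step (k + 2) a
  have h2 := binomZ_two_step k (a - 1 - 1)
  have h2' := binomZ_two_step (k + 2) (a - 1)
  have h3 := binomZ_ratio (k + 4) a
  rw [show a - 1 - 1 = a - 2 by ring] at h1 h2 h2'
  simp only [mult, Nat.add_sub_cancel]
  push_cast at *
  linear_combination ((k : ℤ) + 4) * (k + 3) * (h1 - h2) + (a - 1) * (k + 3 - a) * h1'
    - (a - 2) * (k + 4 - a) * h2' - 2 * (a - 1) * (k + 4 - a) * h3

/-! ### Values and growth of the multiplicities -/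

lemma mult_pascal (n : ℕ) (a : ℤ) : mult (n + 1) a = mult n a + mult n (a - 1) := by
  simp only [mult, binomZ_pascal]; ring

lemma mult_zero (n : ℕ) : mult n 0 = 1 := by simp [mult, binomZ]

lemma mult_one (n : ℕ) : mult n 1 = n - 1 := by simp [mult, binomZ]

lemma mult_two (n : ℕ) : 2 * mult n 2 = n * (n - 3) := by
  have h1 := binomZ_ratio n 1
  have h2 := binomZ_ratio n 2
  have h0 : binomZ n 0 = 1 := by simp [binomZ]
  norm_num [mult] at *
  rw [h0] at h1
  rw [h1] at h2 ⊢
  linear_combination h2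

lemma mult_three (n : ℕ) : 6 * mult n 3 = n * (n - 1) * (n - 5) := by
  have h1 := binomZ_ratio n 1
  have h2 := binomZ_ratio n 2
  have h3 := binomZ_ratio n 3
  have h0 : binomZ n 0 = 1 := by simp [binomZ]
  norm_num [mult] at *
  rw [h0] at h1
  rw [h1] at h2
  linear_combination 2 * h3 + ((n : ℤ) - 5) * h2

/-- Multiplicities are positive up to half the number of qubits. -/
lemma mult_pos (n a : ℕ) (ha : 2 * a ≤ n) : 0 < mult n a := by
  have h := binomZ_ratio n a
  have hp : 0 < binomZ n a := by
    rw [binomZ_natCast]; exact_mod_cast Nat.choose_pos (by omega)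
  have ha' : 2 * (a : ℤ) ≤ n := by exact_mod_cast ha
  have : ((n : ℤ) - a + 1) * mult n a = (n - 2 * a + 1) * binomZ n a := by
    unfold mult; linear_combination h
  have h2 : 0 < ((n : ℤ) - a + 1) * mult n a := by
    rw [this]; exact mul_pos (by linarith) hp
  exact pos_of_mul_pos_right h2 (by linarith)

/-- Reflection antisymmetry `m_{n+1-a} = -m_a`, from `C(n,a) = C(n,n-a)`. -/
lemma mult_reflect (n a : ℕ) (h1 : 1 ≤ a) (h : a ≤ n) :
    mult n ((n : ℤ) + 1 - a) = -mult n a := by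
  have e1 : (n : ℤ) + 1 - a = ((n - (a - 1) : ℕ) : ℤ) := by omega
  have e2 : (n : ℤ) + 1 - a - 1 = ((n - a : ℕ) : ℤ) := by omega
  have e3 : (a : ℤ) - 1 = ((a - 1 : ℕ) : ℤ) := by omega
  unfold mult
  rw [e2, e1, e3]
  simp only [binomZ_natCast]
  rw [Nat.choose_symm (by omega), Nat.choose_symm h]
  ring

/-- For `n ≥ 18` every multiplicity with `a ≥ 4` already exceeds the claimed minimum. The
induction goes from `n` to `n + 2` so that the new middle index `a = ⌊n/2⌋ + 1` is controlled
by reflection. -/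
lemma mult_large : ∀ (n : ℕ), 18 ≤ n → ∀ a : ℕ, 4 ≤ a → 2 * a ≤ n →
    2 * ((n : ℤ) - 1) * (n - 3) * (n - 5) ≤ 3 * mult n a := by
  intro n
  induction n using Nat.strong_induction_on with
  | _ n ih =>
  intro hn a ha h2
  rcases Nat.lt_or_ge n 20 with hlt | hge
  · interval_cases n
    all_goals
      have : a ≤ 9 := by omega
      interval_cases a <;> simp [mult, binomZ, Nat.choose]
  · obtain ⟨k, rfl⟩ : ∃ k, n = k + 2 := ⟨n - 2, by omega⟩
    have IH := ih k (by omega) (by omega)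
    have hk : (18 : ℤ) ≤ k := by omega
    have hs : mult (k + 2) a = mult k a + 2 * mult k (a - 1 : ℤ) + mult k (a - 2 : ℤ) := by
      rw [mult_pascal, mult_pascal, mult_pascal, show (a : ℤ) - 1 - 1 = a - 2 by ring]; ring
    have e1 : (a : ℤ) - 1 = ((a - 1 : ℕ) : ℤ) := by omega
    have e2 : (a : ℤ) - 2 = ((a - 2 : ℕ) : ℤ) := by omega
    have p1 := mult_pos k (a - 1) (by omega)
    have p2 := mult_pos k (a - 2) (by omega)
    -- With `W(n) = 2(n-1)(n-3)(n-5)`, `g1` says `W(k+2) ≤ 2 W(k)` and `g2` says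
    -- `W(k+2) ≤ W(k) + 6 m_3(k)`.
    have g1 : 2 * ((k : ℤ) + 1) * (k - 1) * (k - 3) ≤
        2 * (2 * ((k : ℤ) - 1) * (k - 3) * (k - 5)) := by
      nlinarith [mul_nonneg (mul_nonneg (by linarith : (0:ℤ) ≤ k - 1)
        (by linarith : (0:ℤ) ≤ k - 3)) (by linarith : (0:ℤ) ≤ (k : ℤ) - 18)]
    have g2 : 2 * ((k : ℤ) + 1) * (k - 1) * (k - 3) ≤
        2 * ((k : ℤ) - 1) * (k - 3) * (k - 5) + (k : ℤ) * (k - 1) * (k - 5) := by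
      nlinarith [mul_nonneg (mul_nonneg (by linarith : (0:ℤ) ≤ k - 1)
        (by linarith : (0:ℤ) ≤ k - 18)) (by linarith : (0:ℤ) ≤ (k : ℤ))]
    push_cast
    rw [show (k : ℤ) + 2 - 1 = k + 1 by ring, show (k : ℤ) + 2 - 3 = k - 1 by ring,
      show (k : ℤ) + 2 - 5 = k - 3 by ring, hs, e1, e2]
    by_cases hak : 2 * a ≤ k
    · have h3 := IH a ha hak
      rcases Nat.lt_or_ge a 5 with h4 | h5
      · have : a = 4 := by omega
        subst this
        have m3 := mult_three k
        push_cast at *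
        linarith
      · have := IH (a - 1) (by omega) (by omega)
        linarith
    · have h3 := IH (a - 1) (by omega) (by omega)
      have h4 := IH (a - 2) (by omega) (by omega)
      have h5 : mult k a = 0 ∨ mult k a = - mult k ((a - 1 : ℕ) : ℤ) := by
        rcases (by omega : k + 1 = 2 * a ∨ k + 2 = 2 * a) with h | h
        · left
          have := mult_reflect k a (by omega) (by omega)
          rw [show (k : ℤ) + 1 - a = a by omega] at this
          linarith
        · right
          have := mult_reflect k (a - 1) (by omega) (by omega)
          rwa [show (k : ℤ) + 1 - ((a - 1 : ℕ) : ℤ) = a by omega] at this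
      rcases h5 with h5 | h5 <;> rw [h5] <;> linarith

/-! ### The lower bound -/

/-- A partial sum of a family of total zero is at most the sum of its positive parts, in
absolute value. -/
lemma abs_partial_le {s t : Finset ℕ} (hts : t ⊆ s) (m X : ℕ → ℤ) (hm : ∀ a ∈ s, 0 < m a)
    (h0 : ∑ a ∈ s, m a * X a = 0) :
    |∑ a ∈ t, m a * X a| ≤ ∑ a ∈ s, m a * max (X a) 0 := by
  have key : ∀ r ⊆ s, ∑ a ∈ r, m a * X a ≤ ∑ a ∈ s, m a * max (X a) 0 := by
    intro r hr
    calc ∑ a ∈ r, m a * X a ≤ ∑ a ∈ r, m a * max (X a) 0 :=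
          Finset.sum_le_sum fun a ha =>
            mul_le_mul_of_nonneg_left (le_max_left _ _) (hm a (hr ha)).le
      _ ≤ _ := Finset.sum_le_sum_of_subset_of_nonneg hr fun a ha _ =>
            mul_nonneg (hm a ha).le (le_max_right _ _)
  have h1 := key t hts
  have h2 := key (s \ t) Finset.sdiff_subset
  have h3 := Finset.sum_sdiff (f := fun a => m a * X a) hts
  rw [abs_le]
  constructor <;> linarith

/-- The lower bound for vectors supported on `{0,1,2,3}`: eliminating leaves
`m_1 x_1 + m_3 x_3 = V x_3`, where `V` is the claimed minimum, and `x_3 ≠ 0` because otherwise all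
entries vanish. -/
lemma bound_of_support (n : ℕ) (hn : 13 ≤ n) (X : ℕ → ℤ)
    (hX : ∃ a, a < n / 2 + 1 ∧ X a ≠ 0)
    (h0 : ∑ a ∈ Finset.range (n / 2 + 1), mult n a * X a = 0)
    (h1 : ∑ a ∈ Finset.range (n / 2 + 1), (a * (n + 1 - a) : ℤ) * (mult n a * X a) = 0)
    (h2 : ∑ a ∈ Finset.range (n / 2 + 1),
      (a * (n + 1 - a) * ((a - 1) * (n - a)) : ℤ) * (mult n a * X a) = 0)
    (hs : ∀ a, 4 ≤ a → a < n / 2 + 1 → X a = 0) :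
    2 * ((n : ℤ) - 1) * (n - 3) * (n - 5) ≤
      3 * ∑ a ∈ Finset.range (n / 2 + 1), mult n a * max (X a) 0 := by
  have hsub : Finset.range 4 ⊆ Finset.range (n / 2 + 1) := by
    intro a; simp only [Finset.mem_range]; omega
  have red : ∀ c : ℕ → ℤ, ∑ a ∈ Finset.range (n / 2 + 1), c a * (mult n a * X a)
      = ∑ a ∈ Finset.range 4, c a * (mult n a * X a) := by
    intro c
    refine (Finset.sum_subset hsub fun a ha hb => ?_).symm
    simp only [Finset.mem_range] at ha hb
    rw [hs a (by omega) ha]; ring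
  have hpos : ∀ a ∈ Finset.range (n / 2 + 1), 0 < mult n a := by
    intro a ha
    simp only [Finset.mem_range] at ha
    exact mult_pos n a (by omega)
  have hp := abs_partial_le (t := {1, 3}) (s := Finset.range (n / 2 + 1))
    (by intro a; simp only [Finset.mem_range, Finset.mem_insert, Finset.mem_singleton]; omega)
    (fun a => mult n a) X hpos h0
  have h0' := red fun _ => 1
  simp only [one_mul] at h0'
  rw [h0'] at h0
  rw [red] at h1 h2
  simp only [Finset.sum_range_succ, Finset.sum_range_zero] at h0 h1 h2
  norm_num at h0 h1 h2 hp
  have m3 := mult_three n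
  have m2 := mult_pos n 2 (by omega)
  have m3p := mult_pos n 3 (by omega)
  have hn' : (13 : ℤ) ≤ n := by exact_mod_cast hn
  norm_num at m2 m3p
  rw [mult_zero, mult_one] at *
  -- Second and first moment combined: `n y_1 = 3 (n-4) y_3` for `y_a = m_a x_a`.
  have k1 : (n : ℤ) * ((n - 1) * X 1) = 3 * (n - 4) * (mult n 3 * X 3) := by
    have : ((n : ℤ) - 2) * (n * ((n - 1) * X 1)) =
        ((n : ℤ) - 2) * (3 * (n - 4) * (mult n 3 * X 3)) := by
      linear_combination ((n : ℤ) - 2) * h1 - h2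
    exact mul_left_cancel₀ (by linarith) this
  have k2 : 3 * (((n : ℤ) - 1) * X 1 + mult n 3 * X 3)
      = 2 * ((n : ℤ) - 1) * (n - 3) * (n - 5) * X 3 := by
    have : (n : ℤ) * (3 * (((n : ℤ) - 1) * X 1 + mult n 3 * X 3)) =
        n * (2 * ((n : ℤ) - 1) * (n - 3) * (n - 5) * X 3) := by
      linear_combination 3 * k1 + 2 * ((n : ℤ) - 3) * X 3 * m3
    exact mul_left_cancel₀ (by linarith) this
  have hV : 0 < 2 * ((n : ℤ) - 1) * (n - 3) * (n - 5) :=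
    mul_pos (mul_pos (by linarith) (by linarith)) (by linarith)
  have hx3 : X 3 ≠ 0 := by
    intro h3
    rw [h3] at h1 h0 k1
    have x1 : X 1 = 0 := by
      have hne : (n : ℤ) - 1 ≠ 0 := by linarith
      have hne' : (n : ℤ) ≠ 0 := by linarith
      simp only [mul_zero, mul_eq_zero, hne, hne', false_or] at k1
      exact k1
    rw [x1] at h0 h1
    have x2 : X 2 = 0 := by
      have hne : (n : ℤ) + 1 - 2 ≠ 0 := by linarith
      simpa [hne, m2.ne'] using h1
    rw [x2] at h0
    have x0 : X 0 = 0 := by simpa using h0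
    obtain ⟨a, ha, hne⟩ := hX
    rcases Nat.lt_or_ge a 4 with h | h
    · interval_cases a <;> contradiction
    · exact hne (hs a h ha)
  have habs : 1 ≤ |X 3| := Int.one_le_abs hx3
  have e : 3 * |((n : ℤ) - 1) * X 1 + mult n 3 * X 3|
      = 2 * ((n : ℤ) - 1) * (n - 3) * (n - 5) * |X 3| := by
    rw [← abs_of_pos hV, ← abs_mul, ← k2, abs_mul]; rfl
  nlinarith

/-- The lower bound in general. Assuming it fails, every entry with index at least `4` vanishes,
which is the situation of `bound_of_support`. -/
lemma lower_bound (n : ℕ) (hn : 13 ≤ n) (X : ℕ → ℤ)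
    (hX : ∃ a, a < n / 2 + 1 ∧ X a ≠ 0)
    (h0 : ∑ a ∈ Finset.range (n / 2 + 1), mult n a * X a = 0)
    (h1 : ∑ a ∈ Finset.range (n / 2 + 1), (a * (n + 1 - a) : ℤ) * (mult n a * X a) = 0)
    (h2 : ∑ a ∈ Finset.range (n / 2 + 1),
      (a * (n + 1 - a) * ((a - 1) * (n - a)) : ℤ) * (mult n a * X a) = 0) :
    2 * ((n : ℤ) - 1) * (n - 3) * (n - 5) ≤
      3 * ∑ a ∈ Finset.range (n / 2 + 1), mult n a * max (X a) 0 := by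
  by_contra hlt
  refine hlt (bound_of_support n hn X hX h0 h1 h2 ?_)
  have hpos : ∀ a ∈ Finset.range (n / 2 + 1), 0 < mult n a := by
    intro a ha
    simp only [Finset.mem_range] at ha
    exact mult_pos n a (by omega)
  have hb : ∀ a, a < n / 2 + 1 →
      mult n a * |X a| ≤ ∑ a ∈ Finset.range (n / 2 + 1), mult n a * max (X a) 0 := by
    intro a ha
    have := abs_partial_le (t := {a}) (s := Finset.range (n / 2 + 1))
      (by simpa using ha) (fun a => mult n a) X hpos h0
    rwa [Finset.sum_singleton, abs_mul, abs_of_pos (mult_pos n a (by omega))] at this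
  -- A multiplicity at least the claimed minimum forces the entry to vanish.
  have hz : ∀ a, a < n / 2 + 1 → 2 * ((n : ℤ) - 1) * (n - 3) * (n - 5) ≤ 3 * mult n a →
      X a = 0 := by
    intro a ha hm
    by_contra hne
    have h3 := hb a ha
    have h4 : 1 ≤ |X a| := Int.one_le_abs hne
    have h5 := mult_pos n a (by omega)
    nlinarith
  rcases Nat.lt_or_ge n 18 with h18 | h18
  · have hp0 : ∀ a, 0 ≤ max (X a) 0 := fun a => le_max_right _ _
    have hpx : ∀ a, X a ≤ max (X a) 0 := fun a => le_max_left _ _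
    -- Only `0 ≤ p a` and `X a ≤ p a` are used of `p a = max (X a) 0`, so that the finitely many
    -- cases below are pure linear arithmetic.
    generalize hpd : (fun a => max (X a) 0) = p at *
    have hpd' : ∀ a, max (X a) 0 = p a := fun a => congrFun hpd a
    simp only [hpd'] at *
    have q0 := hp0 0
    have q1 := hp0 1
    have q2 := hp0 2
    have q3 := hp0 3
    have q4 := hp0 4
    have q5 := hp0 5
    have q6 := hp0 6
    have q7 := hp0 7
    have q8 := hp0 8
    have r0 := hpx 0
    have r1 := hpx 1
    have r2 := hpx 2
    have r3 := hpx 3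
    have r4 := hpx 4
    have r5 := hpx 5
    have r6 := hpx 6
    have r7 := hpx 7
    have r8 := hpx 8
    interval_cases n
    all_goals
      clear hX hpos hpd hpd' hn h18 hb
      simp [Finset.sum_range_succ, mult, binomZ, Nat.choose] at h0 h1 h2 hlt
    · have u4 : X 4 < 2 := by by_contra! h; linarith
      have l4 : -2 < X 4 := by by_contra! h; linarith
      have u5 : X 5 < 2 := by by_contra! h; linarith
      have l5 : -2 < X 5 := by by_contra! h; linarith
      have u6 : X 6 < 2 := by by_contra! h; linarith
      have l6 : -2 < X 6 := by by_contra! h; linarith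
      have key : X 4 = 0 ∧ X 5 = 0 ∧ X 6 = 0 := by
        generalize X 4 = x4 at *
        generalize X 5 = x5 at *
        generalize X 6 = x6 at *
        interval_cases x4 <;> interval_cases x5 <;> interval_cases x6 <;>
          -- For `(x_4, x_5, x_6) = ±(0, -1, 1)` the real relaxation in `x_3` dips below the claimed
          -- minimum strictly between two consecutive integers, so `x_3` is split there.
          first
            | (simp; done)
            | (exfalso; linarith)
            | (exfalso; rcases le_or_gt (X 3) (-1) with h | h <;> linarith)
            | (exfalso; rcases le_or_gt (X 3) 0 with h | h <;> linarith)
      intro a ha ha'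
      interval_cases a <;> simp [*]
    · have z5 : X 5 = 0 := hz 5 (by norm_num) (by simp [mult, binomZ, Nat.choose])
      have z6 : X 6 = 0 := hz 6 (by norm_num) (by simp [mult, binomZ, Nat.choose])
      simp only [z5, z6] at h0 h1 h2
      have u4 : X 4 < 2 := by by_contra! h; linarith
      have l4 : -2 < X 4 := by by_contra! h; linarith
      have u7 : X 7 < 2 := by by_contra! h; linarith
      have l7 : -2 < X 7 := by by_contra! h; linarith
      have key : X 4 = 0 ∧ X 7 = 0 := by
        generalize X 4 = x4 at *
        generalize X 7 = x7 at *
        interval_cases x4 <;> interval_cases x7 <;>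
          first | (simp; done) | (exfalso; linarith)
      intro a ha ha'
      interval_cases a <;> simp [*]
    · have z5 : X 5 = 0 := hz 5 (by norm_num) (by simp [mult, binomZ, Nat.choose])
      have z6 : X 6 = 0 := hz 6 (by norm_num) (by simp [mult, binomZ, Nat.choose])
      have z7 : X 7 = 0 := hz 7 (by norm_num) (by simp [mult, binomZ, Nat.choose])
      simp only [z5, z6, z7] at h0 h1 h2
      have u4 : X 4 < 2 := by by_contra! h; linarith
      have l4 : -2 < X 4 := by by_contra! h; linarith
      have key : X 4 = 0 := by
        generalize X 4 = x4 at *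
        interval_cases x4 <;> first | (simp; done) | (exfalso; linarith)
      intro a ha ha'
      interval_cases a <;> simp [*]
    · have z5 : X 5 = 0 := hz 5 (by norm_num) (by simp [mult, binomZ, Nat.choose])
      have z6 : X 6 = 0 := hz 6 (by norm_num) (by simp [mult, binomZ, Nat.choose])
      have z7 : X 7 = 0 := hz 7 (by norm_num) (by simp [mult, binomZ, Nat.choose])
      have z8 : X 8 = 0 := hz 8 (by norm_num) (by simp [mult, binomZ, Nat.choose])
      simp only [z5, z6, z7, z8] at h0 h1 h2
      have u4 : X 4 < 2 := by by_contra! h; linarith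
      have l4 : -2 < X 4 := by by_contra! h; linarith
      have key : X 4 = 0 := by
        generalize X 4 = x4 at *
        interval_cases x4 <;> first | (simp; done) | (exfalso; linarith)
      intro a ha ha'
      interval_cases a <;> simp [*]
    · have z5 : X 5 = 0 := hz 5 (by norm_num) (by simp [mult, binomZ, Nat.choose])
      have z6 : X 6 = 0 := hz 6 (by norm_num) (by simp [mult, binomZ, Nat.choose])
      have z7 : X 7 = 0 := hz 7 (by norm_num) (by simp [mult, binomZ, Nat.choose])
      have z8 : X 8 = 0 := hz 8 (by norm_num) (by simp [mult, binomZ, Nat.choose])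
      simp only [z5, z6, z7, z8] at h0 h1 h2
      have u4 : X 4 < 2 := by by_contra! h; linarith
      have l4 : -2 < X 4 := by by_contra! h; linarith
      have key : X 4 = 0 := by
        generalize X 4 = x4 at *
        interval_cases x4 <;> first | (simp; done) | (exfalso; linarith)
      intro a ha ha'
      interval_cases a <;> simp [*]
  · intro a ha ha'
    exact hz a ha' (mult_large n h18 a ha (by omega))

/-! ### The minimizer -/

/-- The minimizer: the solution supported on `{0,1,2,3}` with `x_3 = 1`. The integer divisions are
exact, see `minimizer_zero` and `minimizer_one`. -/
def minimizer (n : ℕ) (a : ℕ) : ℤ :=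
  if a = 0 then -(((n : ℤ) - 3) * (n - 4) * (n - 5) / 6)
  else if a = 1 then ((n : ℤ) - 4) * (n - 5) / 2
  else if a = 2 then 5 - (n : ℤ)
  else if a = 3 then 1 else 0

lemma six_dvd_prod (k : ℤ) : 6 ∣ (k + 2) * (k + 1) * k := by
  have h2 : (2 : ℤ) ∣ (k + 2) * (k + 1) * k := by
    have : k % 2 = 0 ∨ k % 2 = 1 := by omega
    refine Int.dvd_of_emod_eq_zero ?_
    rcases this with h | h <;> simp [Int.mul_emod, Int.add_emod, h]
  have h3 : (3 : ℤ) ∣ (k + 2) * (k + 1) * k := by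
    have : k % 3 = 0 ∨ k % 3 = 1 ∨ k % 3 = 2 := by omega
    refine Int.dvd_of_emod_eq_zero ?_
    rcases this with h | h | h <;> simp [Int.mul_emod, Int.add_emod, h]
  omega

lemma minimizer_zero (n : ℕ) : 6 * minimizer n 0 = -(((n : ℤ) - 3) * (n - 4) * (n - 5)) := by
  have h := six_dvd_prod ((n : ℤ) - 5)
  rw [show ((n : ℤ) - 5 + 2) * (n - 5 + 1) * (n - 5) = (n - 3) * (n - 4) * (n - 5) by ring] at h
  simp only [minimizer, if_true]
  omega

lemma minimizer_one (n : ℕ) : 2 * minimizer n 1 = ((n : ℤ) - 4) * (n - 5) := by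
  have h : (2 : ℤ) ∣ ((n : ℤ) - 4) * (n - 5) := by
    have : (n : ℤ) % 2 = 0 ∨ (n : ℤ) % 2 = 1 := by omega
    refine Int.dvd_of_emod_eq_zero ?_
    rcases this with h | h <;> simp [Int.mul_emod, Int.sub_emod, h]
  simp only [minimizer, one_ne_zero, if_true, if_false]
  omega

lemma sum_minimizer (n : ℕ) (hn : 13 ≤ n) (f : ℕ → ℤ → ℤ) (hf : ∀ a, f a 0 = 0) :
    ∑ a ∈ Finset.range (n / 2 + 1), f a (minimizer n a) =
      f 0 (minimizer n 0) + f 1 (minimizer n 1) + f 2 (5 - n) + f 3 1 := by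
  have hsub : Finset.range 4 ⊆ Finset.range (n / 2 + 1) := by
    intro a; simp only [Finset.mem_range]; omega
  rw [← Finset.sum_subset hsub]
  · simp [Finset.sum_range_succ, minimizer]
  · intro a _ hb
    simp only [Finset.mem_range] at hb
    have : minimizer n a = 0 := by
      unfold minimizer
      rw [if_neg (by omega), if_neg (by omega), if_neg (by omega), if_neg (by omega)]
    rw [this, hf]

/-- The minimizer has vanishing moments, and its objective equals the claimed minimum. -/
lemma minimizer_spec (n : ℕ) (hn : 13 ≤ n) :
    ∑ a ∈ Finset.range (n / 2 + 1), mult n a * minimizer n a = 0 ∧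
    ∑ a ∈ Finset.range (n / 2 + 1), (a * (n + 1 - a) : ℤ) * (mult n a * minimizer n a) = 0 ∧
    ∑ a ∈ Finset.range (n / 2 + 1),
      (a * (n + 1 - a) * ((a - 1) * (n - a)) : ℤ) * (mult n a * minimizer n a) = 0 ∧
    3 * ∑ a ∈ Finset.range (n / 2 + 1), mult n a * max (minimizer n a) 0
      = 2 * ((n : ℤ) - 1) * (n - 3) * (n - 5) := by
  have hn' : (13 : ℤ) ≤ n := by exact_mod_cast hn
  have a0 := minimizer_zero n
  have a1 := minimizer_one n
  have m2 := mult_two n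
  have m3 := mult_three n
  have p0 : minimizer n 0 ≤ 0 := by
    have : 0 ≤ ((n : ℤ) - 3) * (n - 4) * (n - 5) :=
      mul_nonneg (mul_nonneg (by linarith) (by linarith)) (by linarith)
    linarith
  have p1 : 0 ≤ minimizer n 1 := by
    have : 0 ≤ ((n : ℤ) - 4) * (n - 5) := mul_nonneg (by linarith) (by linarith)
    linarith
  rw [sum_minimizer n hn (fun a x => mult n a * x) (by simp),
    sum_minimizer n hn (fun a x => (a * (n + 1 - a) : ℤ) * (mult n a * x)) (by simp),
    sum_minimizer n hn (fun a x => (a * (n + 1 - a) * ((a - 1) * (n - a)) : ℤ) * (mult n a * x))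
      (by simp),
    sum_minimizer n hn (fun a x => mult n a * max x 0) (by simp)]
  simp only [max_eq_right p0, max_eq_left p1, max_eq_right (by linarith : 5 - (n : ℤ) ≤ 0)]
  norm_num [mult_zero, mult_one]
  refine ⟨?_, ?_, ?_, ?_⟩
  · refine mul_left_cancel₀ (by norm_num : (6 : ℤ) ≠ 0) ?_
    linear_combination a0 + 3 * ((n : ℤ) - 1) * a1 + 3 * (5 - (n : ℤ)) * m2 + m3
  · refine mul_left_cancel₀ (by norm_num : (2 : ℤ) ≠ 0) ?_
    linear_combination (n : ℤ) * (n - 1) * a1 + 2 * ((n : ℤ) - 1) * (5 - n) * m2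
      + ((n : ℤ) - 2) * m3
  · linear_combination ((n : ℤ) - 1) * (n - 2) * (5 - n) * m2
      + ((n : ℤ) - 2) * (n - 3) * m3
  · refine mul_left_cancel₀ (by norm_num : (2 : ℤ) ≠ 0) ?_
    linear_combination 3 * ((n : ℤ) - 1) * a1 + m3

/-! ### Orthogonality as moment equations -/

/-- Orthogonality to `v_0, v_1, v_2` is the vanishing of three moments of `m_a x_a`. -/
lemma orthogonal_iff (n : ℕ) (hn : 13 ≤ n) (X : ℕ → ℤ) :
    (∀ j : Fin 3, ∑ a : Fin (n / 2 + 1),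
          (binomZ (n - 2 * (j : ℕ)) ((a : ℤ) - (j : ℤ)) -
            binomZ (n - 2 * (j : ℕ)) ((a : ℤ) - (j : ℤ) - 1)) * X a = 0) ↔
    ∑ a ∈ Finset.range (n / 2 + 1), mult n a * X a = 0 ∧
    ∑ a ∈ Finset.range (n / 2 + 1), (a * (n + 1 - a) : ℤ) * (mult n a * X a) = 0 ∧
    ∑ a ∈ Finset.range (n / 2 + 1),
      (a * (n + 1 - a) * ((a - 1) * (n - a)) : ℤ) * (mult n a * X a) = 0 := by
  have hn' : (13 : ℤ) ≤ n := by exact_mod_cast hn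
  have c1 : (n : ℤ) * (n - 1) ≠ 0 := mul_ne_zero (by linarith) (by linarith)
  have c2 : (n : ℤ) * (n - 1) * (n - 2) * (n - 3) ≠ 0 :=
    mul_ne_zero (mul_ne_zero c1 (by linarith)) (by linarith)
  have conv : ∀ j : ℕ, ∑ a : Fin (n / 2 + 1), (binomZ (n - 2 * j) ((a : ℤ) - (j : ℤ)) -
            binomZ (n - 2 * j) ((a : ℤ) - (j : ℤ) - 1)) * X a =
      ∑ a ∈ Finset.range (n / 2 + 1), (binomZ (n - 2 * j) ((a : ℤ) - (j : ℤ)) -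
            binomZ (n - 2 * j) ((a : ℤ) - (j : ℤ) - 1)) * X a := fun j =>
    Fin.sum_univ_eq_sum_range (fun a : ℕ => (binomZ (n - 2 * j) ((a : ℤ) - (j : ℤ)) -
            binomZ (n - 2 * j) ((a : ℤ) - (j : ℤ) - 1)) * X a) (n / 2 + 1)
  have e1 : ∑ a ∈ Finset.range (n / 2 + 1), (a * (n + 1 - a) : ℤ) * (mult n a * X a) =
      (n : ℤ) * (n - 1) * ∑ a ∈ Finset.range (n / 2 + 1),
        (binomZ (n - 2) ((a : ℤ) - 1) - binomZ (n - 2) ((a : ℤ) - 1 - 1)) * X a := by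
    rw [Finset.mul_sum]
    refine Finset.sum_congr rfl fun a _ => ?_
    linear_combination -X a * v_one n (by omega) a
  have e2 : ∑ a ∈ Finset.range (n / 2 + 1),
      (a * (n + 1 - a) * ((a - 1) * (n - a)) : ℤ) * (mult n a * X a) =
      (n : ℤ) * (n - 1) * (n - 2) * (n - 3) * ∑ a ∈ Finset.range (n / 2 + 1),
        (binomZ (n - 4) ((a : ℤ) - 2) - binomZ (n - 4) ((a : ℤ) - 2 - 1)) * X a := by
    rw [Finset.mul_sum]
    refine Finset.sum_congr rfl fun a _ => ?_
    linear_combination -X a * v_two n (by omega) a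
  rw [e1, e2, mul_eq_zero_iff_left c1, mul_eq_zero_iff_left c2]
  have d0 := conv 0
  have d1 := conv 1
  have d2 := conv 2
  norm_num at d0 d1 d2
  rw [Fin.forall_fin_succ, Fin.forall_fin_two]
  norm_num
  rw [d0, d1, d2]
  rfl

/-- **Integer optimization for the `SU(2)` symmetry with `4`-local gates.**  With
multiplicities `m_a = C(n,a) - C(n,a-1)` for `a ∈ {0,…,⌊n/2⌋}` and
`(v_j)_a = C(n-2j, a-j) - C(n-2j, a-j-1)` for `j = 0,1,2`, the minimum of `∑_a m_a·max(x_a,0)`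
over nonzero integer vectors `x` orthogonal to `v_0, v_1, v_2` equals `2(n-1)(n-3)(n-5)/3`. -/
theorem su2_4local_integer_optimization (n : ℕ) (hn : 13 ≤ n) :
    IsLeast
      {s : ℚ | ∃ x : Fin (n / 2 + 1) → ℤ, x ≠ 0 ∧
        (∀ j : Fin 3, ∑ a : Fin (n / 2 + 1),
          (binomZ (n - 2 * (j : ℕ)) ((a : ℤ) - (j : ℤ)) -
            binomZ (n - 2 * (j : ℕ)) ((a : ℤ) - (j : ℤ) - 1)) * x a = 0) ∧
        s = ∑ a : Fin (n / 2 + 1), ((binomZ n (a : ℤ) - binomZ n ((a : ℤ) - 1) : ℤ) : ℚ) *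
          ((max (x a) 0 : ℤ) : ℚ)}
      (2 * ((n : ℚ) - 1) * ((n : ℚ) - 3) * ((n : ℚ) - 5) / 3) := by
  constructor
  · obtain ⟨h0, h1, h2, hS⟩ := minimizer_spec n hn
    refine ⟨fun a => minimizer n a, ?_, (orthogonal_iff n hn _).2 ⟨h0, h1, h2⟩, ?_⟩
    · intro h
      have := congrFun h ⟨3, by omega⟩
      simp [minimizer] at this
    · have e := Fin.sum_univ_eq_sum_range
        (fun a : ℕ => mult n a * max (minimizer n a) 0) (n / 2 + 1)
      rw [← e] at hS
      have hQ := congrArg (Int.cast : ℤ → ℚ) hS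
      simp only [mult] at hQ
      push_cast at hQ ⊢
      linarith
  · rintro s ⟨x, hx, horth, rfl⟩
    -- Extend `x` by zero to all of `ℕ`.
    obtain ⟨X, hXx⟩ : ∃ X : ℕ → ℤ, ∀ a : Fin (n / 2 + 1), x a = X a :=
      ⟨fun a => if h : a < n / 2 + 1 then x ⟨a, h⟩ else 0, fun a => by simp [a.isLt]⟩
    simp only [hXx] at horth ⊢
    obtain ⟨h0, h1, h2⟩ := (orthogonal_iff n hn X).1 horth
    obtain ⟨a, ha⟩ := Function.ne_iff.1 hx
    have hS := lower_bound n hn X ⟨a, a.isLt, by rw [← hXx]; exact ha⟩ h0 h1 h2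
    rw [← Fin.sum_univ_eq_sum_range (fun a : ℕ => mult n a * max (X a) 0) (n / 2 + 1)] at hS
    have hQ : ((2 * ((n : ℤ) - 1) * (n - 3) * (n - 5) : ℤ) : ℚ) ≤ _ := Int.cast_le.2 hS
    simp only [mult] at hQ
    push_cast at hQ ⊢
    linarith
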